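/- (Additive double coset formula in the ghost.) Let G be a finite group, let H, L ≤ K be subgroups of G, and let a : Subgroup G → ℤ be a function satisfying a(h⁻¹Ih) = a(I) for every subgroup I ≤ H and every h ∈ H. Then for every subgroup J ≤ L: Σ_{kH ∈ K/H, k⁻¹Jk ≤ H} a(k⁻¹Jk) = Σ_{[γ] ∈ L\K/H} Σ_{ℓ(L ∩ ᵞH) ∈ L/(L ∩ ᵞH), ℓ⁻¹Jℓ ≤ ᵞH} a((ℓγ)⁻¹J(ℓγ)), where the outer sum on the right runs over the double cosets LγH in K with arbitrarily chosen representatives γ (the sums do not depend on the choices of coset and double coset representatives, by the invariance hypothesis on a). -/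

import Mathlib

open scoped Classical

theorem conj_aux {G : Type*} [Group G] (J : Subgroup G) (g h : G) :
    J.map (MulAut.conj (g * h)⁻¹).toMonoidHom
      = (J.map (MulAut.conj g⁻¹).toMonoidHom).map (MulAut.conj h⁻¹).toMonoidHom := by
  rw [Subgroup.map_map]
  congr 1
  ext x
  simp [mul_assoc]

theorem conj_le_aux {G : Type*} [Group G] (I H : Subgroup G) (g : G) :
    I.map (MulAut.conj g⁻¹).toMonoidHom ≤ H ↔ I ≤ H.map (MulAut.conj g).toMonoidHom := by
  constructor
  · intro h x hx
    refine ⟨g⁻¹ * x * g, h ⟨x, hx, by simp⟩, by simp [mul_assoc]⟩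
  · rintro h _ ⟨x, hx, rfl⟩
    obtain ⟨y, hy, rfl⟩ := h hx
    simpa [mul_assoc] using hy

theorem conj_self_aux {G : Type*} [Group G] (H : Subgroup G) (h : G) (hh : h ∈ H) :
    H.map (MulAut.conj h).toMonoidHom = H := by
  ext x
  constructor
  · rintro ⟨y, hy, rfl⟩
    exact H.mul_mem (H.mul_mem hh hy) (H.inv_mem hh)
  · intro hx
    exact ⟨h⁻¹ * x * h, H.mul_mem (H.mul_mem (H.inv_mem hh) hx) hh, by simp [mul_assoc]⟩

theorem mem_conj_aux {G : Type*} [Group G] (H : Subgroup G) (g x : G) :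
    x ∈ H.map (MulAut.conj g).toMonoidHom ↔ g⁻¹ * x * g ∈ H := by
  constructor
  · rintro ⟨y, hy, rfl⟩
    simpa [mul_assoc] using hy
  · intro hx
    exact ⟨_, hx, by simp [mul_assoc]⟩


/-- Additive double coset formula in the ghost: for subgroups
`H, L ≤ K` of `G`, `a : Subgroup G → ℤ` invariant under `H`-conjugation on
subgroups of `H`, and `J ≤ L`:
`Σ_{kH ∈ K/H, J^k ≤ H} a(J^k) = Σ_{[γ] ∈ L\K/H} Σ_{ℓ(L∩ᵞH) ∈ L/(L∩ᵞH), J^ℓ ≤ ᵞH} a(J^{ℓγ})`. -/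
theorem stmt6 {G : Type*} [Group G] [Finite G]
    (K H L : Subgroup G) (hH : H ≤ K) (hL : L ≤ K)
    (a : Subgroup G → ℤ)
    (ha : ∀ I : Subgroup G, I ≤ H → ∀ h ∈ H,
      a (I.map (MulAut.conj h⁻¹).toMonoidHom) = a I)
    (J : Subgroup G) (hJ : J ≤ L) :
    (∑ᶠ z : ↥K ⧸ H.subgroupOf K,
        if J.map (MulAut.conj ((z.out : K) : G)⁻¹).toMonoidHom ≤ H then
          a (J.map (MulAut.conj ((z.out : K) : G)⁻¹).toMonoidHom)
        else 0)
    = ∑ᶠ d : DoubleCoset.Quotient (↑(L.subgroupOf K) : Set K) (↑(H.subgroupOf K) : Set K),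
        ∑ᶠ y : ↥L ⧸ ((L ⊓ H.map (MulAut.conj ((d.out : K) : G)).toMonoidHom).subgroupOf L),
          if J.map (MulAut.conj ((y.out : L) : G)⁻¹).toMonoidHom
              ≤ H.map (MulAut.conj ((d.out : K) : G)).toMonoidHom then
            a (J.map (MulAut.conj (((y.out : L) : G) * ((d.out : K) : G))⁻¹).toMonoidHom)
          else 0 := by
  let F : G → ℤ := fun g => if J.map (MulAut.conj g⁻¹).toMonoidHom ≤ H then
    a (J.map (MulAut.conj g⁻¹).toMonoidHom) else 0
  have hF : ∀ g h, h ∈ H → F (g * h) = F g := by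
    intro g h hh
    simp only [F]
    rw [conj_aux, conj_le_aux _ H h, conj_self_aux H h hh]
    split_ifs with hc
    · exact ha _ hc h hh
    · rfl
  have hR : ∀ g l : G, (if J.map (MulAut.conj l⁻¹).toMonoidHom
              ≤ H.map (MulAut.conj g).toMonoidHom then
            a (J.map (MulAut.conj (l * g)⁻¹).toMonoidHom)
          else 0) = F (l * g) := by
    intro g l
    simp only [F]
    rw [← conj_le_aux, ← conj_aux]
  simp only [hR]
  change (∑ᶠ z : ↥K ⧸ H.subgroupOf K, F ((z.out : K) : G)) = _
  have : Finite (DoubleCoset.Quotient (↑(L.subgroupOf K) : Set K) (↑(H.subgroupOf K) : Set K)) :=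
    Quotient.finite _
  have := Fintype.ofFinite G
  have := Fintype.ofFinite
    (DoubleCoset.Quotient (↑(L.subgroupOf K) : Set K) (↑(H.subgroupOf K) : Set K))
  simp only [finsum_eq_sum_of_fintype]
  rw [← Fintype.sum_sigma']
  symm
  refine Fintype.sum_bijective
    (fun p => (QuotientGroup.mk
      ((⟨((p.2.out : L) : G), hL (p.2.out : L).2⟩ : K) * (p.1.out : K)) : ↥K ⧸ H.subgroupOf K))
    ⟨?_, ?_⟩ _ _ ?_
  · rintro ⟨d, y⟩ ⟨d', y'⟩ h
    simp only [QuotientGroup.eq, Subgroup.mem_subgroupOf] at h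
    have hd : d = d' := by
      rw [← Quotient.out_eq d, ← Quotient.out_eq d']
      refine (DoubleCoset.eq (L.subgroupOf K) (H.subgroupOf K) _ _).2
        ⟨(⟨((y'.out : L) : G), hL (y'.out : L).2⟩ : K)⁻¹ *
          ⟨((y.out : L) : G), hL (y.out : L).2⟩, ?_, _, Subgroup.mem_subgroupOf.2 h, ?_⟩
      · rw [Subgroup.mem_subgroupOf]
        exact L.mul_mem (L.inv_mem (y'.out : L).2) (y.out : L).2
      · group
    subst hd
    congr 1
    rw [← QuotientGroup.out_eq' y, ← QuotientGroup.out_eq' y', QuotientGroup.eq,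
      Subgroup.mem_subgroupOf, Subgroup.mem_inf]
    refine ⟨Subtype.property _, ?_⟩
    rw [mem_conj_aux]
    simpa [mul_assoc] using h
  · intro z
    obtain ⟨k, rfl⟩ := QuotientGroup.mk_surjective z
    obtain ⟨l, hl, h, hh, e⟩ := (DoubleCoset.eq (L.subgroupOf K) (H.subgroupOf K) _ _).1
      (Quotient.out_eq (DoubleCoset.mk (L.subgroupOf K) (H.subgroupOf K) k))
    rw [Subgroup.mem_subgroupOf] at hl hh
    refine ⟨⟨DoubleCoset.mk (L.subgroupOf K) (H.subgroupOf K) k,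
      QuotientGroup.mk (⟨(l : G), hl⟩ : L)⟩, ?_⟩
    have h1 := QuotientGroup.out_eq' (QuotientGroup.mk (⟨(l : G), hl⟩ : L) : ↥L ⧸ ((L ⊓ H.map (MulAut.conj (((DoubleCoset.mk (L.subgroupOf K) (H.subgroupOf K) k).out : K) : G)).toMonoidHom).subgroupOf L))
    rw [QuotientGroup.eq, Subgroup.mem_subgroupOf, Subgroup.mem_inf, mem_conj_aux] at h1
    have h2 := H.mul_mem h1.2 hh
    simp only [QuotientGroup.eq, Subgroup.mem_subgroupOf]
    have e' := congrArg (Subtype.val) e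
    simp only [Subgroup.coe_mul] at e'
    simp only [Subgroup.coe_mul, Subgroup.coe_inv, mul_inv_rev]
    rw [e']
    simpa [mul_assoc] using h2
  · rintro ⟨d, y⟩
    obtain ⟨h, hh⟩ := QuotientGroup.mk_out_eq_mul (H.subgroupOf K)
      ((⟨((y.out : L) : G), hL (y.out : L).2⟩ : K) * (d.out : K))
    simp only [hh]
    exact (hF _ _ (Subgroup.mem_subgroupOf.1 h.2)).symm
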